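/- Let V(x) = x² and Ω(R) = (−R, R) for R > 0, so that λ_m^0(h) = (2m+1)h. For each integer m ≥ 0 there exist constants C, δ > 0 such that for all h, R > 0 with h·R⁻² < δ: |λ_m^{Ω(R)}(h) − (2m+1)h − T(h,R)| ≤ C·(h·R⁻²)·T(h,R), where T(h,R) = (2^{2+m}/(m!·√π))·h^{1/2−m}·R^{2m+1}·e^{−R²/h}. -/

import Mathlib

open MeasureTheory Set Filter

/-- `u` is an eigenfunction of the Dirichlet realization of `P(h) = h²D_x² + V`
on `(a,b)` with eigenvalue `lam`. -/
def IsEigenfunctionPD (V : ℝ → ℝ) (a b h lam : ℝ) (u : ℝ → ℝ) : Prop :=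
  (∃ x ∈ Set.Icc a b, u x ≠ 0) ∧ ContDiffOn ℝ 2 u (Set.Icc a b) ∧
    u a = 0 ∧ u b = 0 ∧
    ∀ x ∈ Set.Ioo a b, -(h ^ 2) * deriv (deriv u) x + V x * u x = lam * u x

/-- `lam` is an eigenvalue of the Dirichlet realization of `P(h)` on `(a,b)`. -/
def IsEigPD (V : ℝ → ℝ) (a b h lam : ℝ) : Prop :=
  ∃ u : ℝ → ℝ, IsEigenfunctionPD V a b h lam u

/-- `lam` is the `m`-th element of `S` in increasing order (counting from `m = 0`). -/
def IsNthEig (S : Set ℝ) (m : ℕ) (lam : ℝ) : Prop :=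
  lam ∈ S ∧ {x ∈ S | x < lam}.Finite ∧ {x ∈ S | x < lam}.ncard = m

/-!
After the rescaling `x = R / √h` an eigenvalue of the confined oscillator is `h * μ`, and since the
potential is even, `μ` is an eigenvalue exactly when the even or the odd Kummer solution of the
Hermite equation, with parameter `a = (2 s + 1 - μ) / 4` and `s = 0` or `1`, vanishes at `x`.

Near a polynomial solution write `a = -n - e`. The first `n + 1` terms of the power series form a
polynomial head, and the remaining terms carry the factor `-e`, so the eigenvalue equation reads
`e = head / tail`. The tail grows like `exp (x²)` times a power of `x`: its primitives satisfy a
three-term recurrence starting from `exp (x²) * ∫₀ˣ exp (-t²)`, which gives `√π / 2 * exp (x²)` to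
leading order. The right-hand side is therefore a contraction in `e` with Lipschitz constant
`O(x⁻²)`, and its fixed point is `head / tail` at `e = 0` up to a relative error `O(x⁻²)`. The
degree `m = s + 2 n` is shifted by `2 e < 1`, so these fixed points exhaust the spectrum in
increasing order.
-/

open Asymptotics Topology

section Pochhammer

variable {K : Type*} [CommRing K] [LinearOrder K] [IsStrictOrderedRing K] {a b c : K}

lemma ascPochhammer_eval_nonneg (ha : 0 ≤ a) (k : ℕ) : 0 ≤ (ascPochhammer K k).eval a := by
  induction k with
  | zero => simp
  | succ k ih =>
    rw [ascPochhammer_succ_eval]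
    positivity

lemma ascPochhammer_eval_mono (ha : 0 ≤ a) (hab : a ≤ b) (k : ℕ) :
    (ascPochhammer K k).eval a ≤ (ascPochhammer K k).eval b := by
  induction k with
  | zero => simp
  | succ k ih =>
    rw [ascPochhammer_succ_eval, ascPochhammer_succ_eval]
    have := ascPochhammer_eval_nonneg (ha.trans hab) k
    gcongr

lemma ascPochhammer_eval_sub_le (ha : 0 ≤ a) (hab : a ≤ b) (hbc : b ≤ c) (hc : 1 ≤ c) (k : ℕ) :
    (ascPochhammer K k).eval b - (ascPochhammer K k).eval a ≤
      (b - a) * k * (ascPochhammer K k).eval c := by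
  induction k with
  | zero => simp
  | succ k ih =>
    simp only [ascPochhammer_succ_eval]
    set A := (ascPochhammer K k).eval a
    set B := (ascPochhammer K k).eval b
    set P := (ascPochhammer K k).eval c
    have hBP : B ≤ P := ascPochhammer_eval_mono (ha.trans hab) hbc k
    have hP : 0 ≤ P := ascPochhammer_eval_nonneg (by linarith) k
    have : 0 ≤ b - a := sub_nonneg.2 hab
    calc B * (b + k) - A * (a + k) = (B - A) * (a + k) + (b - a) * B := by ring
      _ ≤ (b - a) * k * P * (c + k) + (b - a) * (P * (c + k)) := by
        gcongr
        · linarith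
        · exact hBP.trans (le_mul_of_one_le_right hP (by linarith [k.cast_nonneg (α := K)]))
      _ = (b - a) * (k + 1 : ℕ) * (P * (c + k)) := by push_cast; ring

lemma ascPochhammer_eval_neg_natCast_sub_ne_zero {n : ℕ} {e : K} (he : |e| < 1) :
    (ascPochhammer K n).eval (-n - e) ≠ 0 := by
  rw [Ne, ascPochhammer_eval_eq_zero_iff]
  rintro ⟨k, hk, h⟩
  have : (k : K) + 1 ≤ n := by exact_mod_cast hk
  linarith [(abs_lt.1 he).1]

lemma ascPochhammer_eval_one_le_half {K : Type*} [Field K] [LinearOrder K] [IsStrictOrderedRing K]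
    (k : ℕ) :
    (ascPochhammer K k).eval 1 ≤ (2 * k + 1) * (ascPochhammer K k).eval (1 / 2) := by
  induction k with
  | zero => simp
  | succ k ih =>
    rw [ascPochhammer_succ_eval, ascPochhammer_succ_eval]
    have hpos := ascPochhammer_pos k (1 / 2 : K) (by norm_num)
    calc (ascPochhammer K k).eval 1 * (1 + k)
        ≤ (2 * k + 1) * (ascPochhammer K k).eval (1 / 2) * (1 + k) := by gcongr
      _ ≤ (2 * (k + 1 : ℕ) + 1) * ((ascPochhammer K k).eval (1 / 2) * (1 / 2 + k)) := by
        push_cast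
        nlinarith

end Pochhammer

section HermiteSeries

variable (a : ℝ) (s : ℕ) (x : ℝ) (k : ℕ)

/-- The `k`-th term of `hermiteSeries a s x`. -/
noncomputable def hermiteTerm : ℝ :=
  4 ^ k * (ascPochhammer ℝ k).eval a * x ^ (2 * k + s) / (2 * k + s).factorial

/-- The power series `∑ₖ 4ᵏ (a)ₖ x^(2k+s) / (2k+s)!`. For `s = 0` and `s = 1` it is the even and
the odd Kummer solution, `M(a, 1/2, x²)` and `x M(a, 3/2, x²)`, of the Hermite equation
`w'' = 2 x w' + (4 a - 2 s) w`; the higher `s` are the iterated primitives of these, which appear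
as remainders of the series. -/
noncomputable def hermiteSeries : ℝ := ∑' k, hermiteTerm a s x k

lemma hermiteTerm_succ :
    hermiteTerm a s x (k + 1) =
      4 * (a + k) * x ^ 2 / ((2 * k + s + 1) * (2 * k + s + 2)) * hermiteTerm a s x k := by
  rw [hermiteTerm, hermiteTerm, show 2 * (k + 1) + s = 2 * k + s + 1 + 1 by ring,
    Nat.factorial_succ, Nat.factorial_succ, ascPochhammer_succ_eval]
  push_cast
  field_simp
  ring

lemma hermiteTerm_succ_eq_shift :
    hermiteTerm a s x (k + 1) =
      2 * x * hermiteTerm a (s + 1) x k + (4 * a - 2 * s - 4) * hermiteTerm a (s + 2) x k := by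
  simp only [hermiteTerm]
  rw [show 2 * (k + 1) + s = 2 * k + s + 2 by ring, ← add_assoc, ← add_assoc,
    Nat.factorial_succ (2 * k + s + 1), ascPochhammer_succ_eval]
  push_cast
  field_simp
  ring

lemma hermiteTerm_nonneg {a x : ℝ} (ha : 0 ≤ a) (hx : 0 ≤ x) (s k : ℕ) :
    0 ≤ hermiteTerm a s x k := by
  have := ascPochhammer_eval_nonneg ha k
  unfold hermiteTerm
  positivity

lemma norm_hermiteTerm_le {x y : ℝ} (h : |x| ≤ |y|) :
    ‖hermiteTerm a s x k‖ ≤ ‖hermiteTerm a s y k‖ := by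
  simp only [hermiteTerm, norm_div, norm_mul, norm_pow, Real.norm_eq_abs x, Real.norm_eq_abs y]
  gcongr

lemma summable_hermiteTerm : Summable (hermiteTerm a s x) := by
  refine summable_of_ratio_norm_eventually_le (r := 1 / 2) (by norm_num) ?_
  have hlim := (tendsto_const_div_atTop_nhds_zero_nat (4 * (|a| + 1) * x ^ 2)).eventually
    (gt_mem_nhds (by norm_num : (0 : ℝ) < 1 / 2))
  filter_upwards [hlim, eventually_gt_atTop 0] with k hk hk0
  have hk0' : (0 : ℝ) < k := by exact_mod_cast hk0
  have hak : |a + k| ≤ (|a| + 1) * (2 * k + s + 1) := by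
    have : |a + k| ≤ |a| + k := by simpa using abs_add_le a k
    nlinarith [abs_nonneg a, s.cast_nonneg (α := ℝ)]
  rw [hermiteTerm_succ, norm_mul]
  refine mul_le_mul_of_nonneg_right ?_ (norm_nonneg _)
  calc ‖4 * (a + k) * x ^ 2 / ((2 * k + s + 1) * (2 * k + s + 2))‖
      = 4 * |a + k| * x ^ 2 / ((2 * k + s + 1) * (2 * k + s + 2)) := by
        rw [Real.norm_eq_abs, abs_div, abs_mul, abs_mul, abs_of_nonneg (sq_nonneg x),
          abs_of_pos (by positivity : (0 : ℝ) < (2 * k + s + 1) * (2 * k + s + 2))]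
        norm_num
    _ ≤ 4 * ((|a| + 1) * (2 * k + s + 1)) * x ^ 2 / ((2 * k + s + 1) * k) := by
        gcongr
        linarith [s.cast_nonneg (α := ℝ)]
    _ = 4 * (|a| + 1) * x ^ 2 / k := by field_simp
    _ ≤ 1 / 2 := hk.le

lemma hermiteSeries_recurrence :
    hermiteSeries a s x =
      x ^ s / s.factorial + 2 * x * hermiteSeries a (s + 1) x +
        (4 * a - 2 * s - 4) * hermiteSeries a (s + 2) x := by
  have h₁ := (summable_hermiteTerm a (s + 1) x).mul_left (2 * x)
  have h₂ := (summable_hermiteTerm a (s + 2) x).mul_left (4 * a - 2 * s - 4)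
  rw [hermiteSeries, (summable_hermiteTerm a s x).tsum_eq_zero_add, hermiteSeries, hermiteSeries,
    add_assoc, ← tsum_mul_left, ← tsum_mul_left, ← h₁.tsum_add h₂]
  simp only [hermiteTerm_succ_eq_shift]
  simp [hermiteTerm]

lemma hermiteSeries_eq_sum_add (N : ℕ) :
    hermiteSeries a s x = ∑ k ∈ Finset.range N, hermiteTerm a s x k +
      4 ^ N * (ascPochhammer ℝ N).eval a * hermiteSeries (a + N) (s + 2 * N) x := by
  rw [hermiteSeries, ← (summable_hermiteTerm a s x).sum_add_tsum_nat_add N, hermiteSeries,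
    ← tsum_mul_left]
  congr 2 with k
  have hmul : (ascPochhammer ℝ (k + N)).eval a =
      (ascPochhammer ℝ N).eval a * (ascPochhammer ℝ k).eval (a + N) := by
    rw [add_comm k N, ← ascPochhammer_mul, Polynomial.eval_mul, Polynomial.eval_comp]
    simp
  rw [hermiteTerm, hermiteTerm, hmul, show 2 * (k + N) + s = 2 * k + (s + 2 * N) by ring]
  ring

lemma hermiteSeries_neg : hermiteSeries a s (-x) = (-1) ^ s * hermiteSeries a s x := by
  rw [hermiteSeries, hermiteSeries, ← tsum_mul_left]
  congr 1 with k
  rw [hermiteTerm, hermiteTerm, neg_pow, pow_add (-1 : ℝ), pow_mul]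
  norm_num
  ring

lemma hermiteSeries_zero_zero : hermiteSeries a 0 0 = 1 := by
  rw [hermiteSeries, tsum_eq_single 0 (fun k hk => by simp [hermiteTerm, hk])]
  simp [hermiteTerm]

lemma hermiteSeries_succ_zero : hermiteSeries a (s + 1) 0 = 0 := by
  simp [hermiteSeries, hermiteTerm]

lemma hasDerivAt_hermiteTerm_succ :
    HasDerivAt (fun y => hermiteTerm a (s + 1) y k) (hermiteTerm a s x k) x := by
  refine (((hasDerivAt_pow (2 * k + (s + 1)) x).const_mul
    (4 ^ k * (ascPochhammer ℝ k).eval a)).div_const _).congr_deriv ?_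
  rw [hermiteTerm, ← add_assoc, Nat.add_sub_cancel, Nat.factorial_succ]
  push_cast
  field_simp

lemma hasDerivAt_hermiteSeries_succ :
    HasDerivAt (hermiteSeries a (s + 1)) (hermiteSeries a s x) x := by
  have hx : x ∈ Metric.ball (0 : ℝ) (|x| + 1) := by simp
  refine hasDerivAt_tsum_of_isPreconnected (summable_hermiteTerm a s (|x| + 1)).norm
    Metric.isOpen_ball (convex_ball _ _).isPreconnected
    (fun k y _ => hasDerivAt_hermiteTerm_succ a s y k) (fun k y hy => ?_) hx
    (summable_hermiteTerm a (s + 1) x) hx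
  rw [mem_ball_zero_iff, Real.norm_eq_abs] at hy
  exact norm_hermiteTerm_le a s k (hy.le.trans (le_abs_self _))

lemma hasDerivAt_hermiteSeries_zero :
    HasDerivAt (hermiteSeries a 0)
      (2 * x * hermiteSeries a 0 x + (4 * a - 2) * hermiteSeries a 1 x) x := by
  have hrec : hermiteSeries a 0 = fun y =>
      1 + 2 * y * hermiteSeries a 1 y + (4 * a - 4) * hermiteSeries a 2 y := by
    ext y
    simpa using hermiteSeries_recurrence a 0 y
  have hlin : HasDerivAt (fun y : ℝ => 2 * y) 2 x := by
    simpa using (hasDerivAt_id x).const_mul (2 : ℝ)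
  have h := ((hlin.mul (hasDerivAt_hermiteSeries_succ a 0 x)).const_add 1).add
    ((hasDerivAt_hermiteSeries_succ a 1 x).const_mul (4 * a - 4))
  exact (h.congr_of_eventuallyEq (.of_eq hrec)).congr_deriv (by ring)

end HermiteSeries

section HermiteSeriesBounds

variable {a b x : ℝ}

lemma hermiteSeries_mono (ha : 0 ≤ a) (hab : a ≤ b) (hx : 0 ≤ x) (s : ℕ) :
    hermiteSeries a s x ≤ hermiteSeries b s x := by
  refine (summable_hermiteTerm a s x).tsum_le_tsum (fun k => ?_) (summable_hermiteTerm b s x)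
  have := ascPochhammer_eval_mono ha hab k
  unfold hermiteTerm
  gcongr

lemma pow_div_factorial_le_hermiteSeries (ha : 0 ≤ a) (hx : 0 ≤ x) (s : ℕ) :
    x ^ s / s.factorial ≤ hermiteSeries a s x := by
  calc x ^ s / s.factorial = hermiteTerm a s x 0 := by simp [hermiteTerm]
    _ ≤ hermiteSeries a s x :=
      (summable_hermiteTerm a s x).le_tsum 0 fun k _ => hermiteTerm_nonneg ha hx s k

lemma hermiteSeries_pos (ha : 0 ≤ a) (hx : 0 < x) (s : ℕ) : 0 < hermiteSeries a s x :=
  lt_of_lt_of_le (by positivity) (pow_div_factorial_le_hermiteSeries ha hx.le s)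

lemma hermiteSeries_one_le_half (hx : 0 ≤ x) (s : ℕ) :
    hermiteSeries 1 (s + 1) x ≤ x * hermiteSeries (1 / 2) s x := by
  rw [hermiteSeries, hermiteSeries, ← tsum_mul_left]
  refine (summable_hermiteTerm 1 (s + 1) x).tsum_le_tsum (fun k => ?_)
    ((summable_hermiteTerm (1 / 2) s x).mul_left x)
  have hhalf : 0 ≤ (ascPochhammer ℝ k).eval (1 / 2) := ascPochhammer_eval_nonneg (by norm_num) k
  have hle : (ascPochhammer ℝ k).eval 1 ≤ (2 * k + s + 1) * (ascPochhammer ℝ k).eval (1 / 2) :=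
    (ascPochhammer_eval_one_le_half k).trans (by gcongr; simp)
  simp only [hermiteTerm, ← add_assoc, Nat.factorial_succ]
  push_cast
  calc 4 ^ k * (ascPochhammer ℝ k).eval 1 * x ^ (2 * k + s + 1) /
        ((2 * k + s + 1) * (2 * k + s).factorial)
      ≤ 4 ^ k * ((2 * k + s + 1) * (ascPochhammer ℝ k).eval (1 / 2)) * x ^ (2 * k + s + 1) /
        ((2 * k + s + 1) * (2 * k + s).factorial) := by gcongr
    _ = x * (4 ^ k * (ascPochhammer ℝ k).eval (1 / 2) * x ^ (2 * k + s) /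
        (2 * k + s).factorial) := by field_simp; ring

lemma hermiteSeries_sub_le {c : ℝ} (ha : 0 ≤ a) (hab : a ≤ b) (hbc : b ≤ c) (hc : 1 ≤ c)
    (hx : 0 ≤ x) (s : ℕ) :
    hermiteSeries b (s + 1) x - hermiteSeries a (s + 1) x ≤
      (b - a) * (x * hermiteSeries c s x) := by
  have hb' := summable_hermiteTerm b (s + 1) x
  have ha' := summable_hermiteTerm a (s + 1) x
  rw [hermiteSeries, hermiteSeries, hermiteSeries, ← tsum_mul_left, ← tsum_mul_left,
    ← hb'.tsum_sub ha']
  refine (hb'.sub ha').tsum_le_tsum (fun k => ?_)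
    (((summable_hermiteTerm c s x).mul_left x).mul_left _)
  have hP : 0 ≤ (ascPochhammer ℝ k).eval c := ascPochhammer_eval_nonneg (by linarith) k
  have : 0 ≤ b - a := sub_nonneg.2 hab
  have hle : (ascPochhammer ℝ k).eval b - (ascPochhammer ℝ k).eval a ≤
      (b - a) * (2 * k + s + 1) * (ascPochhammer ℝ k).eval c :=
    (ascPochhammer_eval_sub_le ha hab hbc hc k).trans <| by
      gcongr
      linarith [k.cast_nonneg (α := ℝ), s.cast_nonneg (α := ℝ)]
  simp only [hermiteTerm, ← add_assoc, Nat.factorial_succ]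
  push_cast
  rw [← sub_div, ← sub_mul, ← mul_sub]
  calc 4 ^ k * ((ascPochhammer ℝ k).eval b - (ascPochhammer ℝ k).eval a) * x ^ (2 * k + s + 1) /
        ((2 * k + s + 1) * (2 * k + s).factorial)
      ≤ 4 ^ k * ((b - a) * (2 * k + s + 1) * (ascPochhammer ℝ k).eval c) * x ^ (2 * k + s + 1) /
        ((2 * k + s + 1) * (2 * k + s).factorial) := by gcongr
    _ = (b - a) * (x * (4 ^ k * (ascPochhammer ℝ k).eval c * x ^ (2 * k + s) /
        (2 * k + s).factorial)) := by field_simp; ring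

end HermiteSeriesBounds

section GaussianAsymptotics

lemma exp_neg_const_mul_isBigO_inv_sq {c : ℝ} (hc : 0 < c) :
    (fun x : ℝ => Real.exp (-c * x)) =O[atTop] fun x => (x ^ 2)⁻¹ := by
  refine (isLittleO_exp_neg_mul_rpow_atTop hc (-2 : ℤ)).isBigO.congr_right fun x => ?_
  rw [Real.rpow_intCast, zpow_neg, zpow_ofNat]

lemma pow_mul_exp_neg_sq_isBigO_inv_sq (N : ℕ) :
    (fun x : ℝ => x ^ N * Real.exp (-x ^ 2)) =O[atTop] fun x => (x ^ 2)⁻¹ := by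
  have h := (rpow_mul_exp_neg_mul_sq_isLittleO_exp_neg one_pos (N : ℝ)).isBigO
  simp only [Real.rpow_natCast, neg_one_mul] at h
  exact h.trans (exp_neg_const_mul_isBigO_inv_sq (by norm_num))

lemma integral_exp_neg_sq_sub_isBigO_inv_sq :
    (fun x : ℝ => (∫ t in (0 : ℝ)..x, Real.exp (-t ^ 2)) - √Real.pi / 2) =O[atTop]
      fun x => (x ^ 2)⁻¹ := by
  refine IsBigO.trans (.of_norm_eventuallyLE ?_) (exp_neg_const_mul_isBigO_inv_sq one_pos)
  filter_upwards [eventually_ge_atTop 1] with x hx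
  have hgauss : Integrable fun t : ℝ => Real.exp (-t ^ 2) := by
    simpa only [neg_one_mul] using integrable_exp_neg_mul_sq one_pos
  have htotal : ∫ t in Ioi (0 : ℝ), Real.exp (-t ^ 2) = √Real.pi / 2 := by
    simpa only [neg_one_mul, div_one] using integral_gaussian_Ioi 1
  have htail : (∫ t in (0 : ℝ)..x, Real.exp (-t ^ 2)) - √Real.pi / 2 =
      -∫ t in Ioi x, Real.exp (-t ^ 2) := by
    rw [← htotal, ← intervalIntegral.integral_Ioi_sub_Ioi hgauss.integrableOn (by linarith)]
    ring
  rw [htail, norm_neg, Real.norm_of_nonneg (setIntegral_nonneg measurableSet_Ioi fun t _ =>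
    (Real.exp_pos _).le), neg_one_mul, ← integral_exp_neg_Ioi]
  refine setIntegral_mono_on hgauss.integrableOn (integrableOn_exp_neg_Ioi x) measurableSet_Ioi
    fun t ht => Real.exp_le_exp.2 ?_
  nlinarith [mem_Ioi.1 ht]

end GaussianAsymptotics

section HermiteSeriesAsymptotics

lemma exp_neg_sq_mul_hermiteSeries_one_one (x : ℝ) :
    Real.exp (-x ^ 2) * hermiteSeries 1 1 x = ∫ t in (0 : ℝ)..x, Real.exp (-t ^ 2) := by
  have hderiv (y : ℝ) :
      HasDerivAt (fun y => Real.exp (-y ^ 2) * hermiteSeries 1 1 y) (Real.exp (-y ^ 2)) y := by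
    refine ((hasDerivAt_pow 2 y).neg.exp.mul (hasDerivAt_hermiteSeries_succ 1 0 y)).congr_deriv ?_
    have hrec := hermiteSeries_recurrence 1 0 y
    norm_num at hrec
    simp only [Pi.neg_apply, hrec]
    norm_num
    ring
  have hcont : Continuous fun t : ℝ => Real.exp (-t ^ 2) := by fun_prop
  rw [intervalIntegral.integral_eq_sub_of_hasDerivAt (fun y _ => hderiv y)
    (hcont.intervalIntegrable _ _)]
  simp [hermiteSeries_succ_zero]

lemma two_mul_mul_hermiteSeries_one_succ_le {x : ℝ} (hx : 0 ≤ x) (s : ℕ) :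
    2 * x * hermiteSeries 1 (s + 1) x ≤ (1 + s / 2) * hermiteSeries 1 s x := by
  have hrec := hermiteSeries_recurrence 1 s x
  have hfour : 4 * hermiteSeries 1 (s + 2) x ≤ hermiteSeries 1 s x := by
    have hsplit := hermiteSeries_eq_sum_add 1 s x 1
    have hmono := hermiteSeries_mono zero_le_one (b := 1 + (1 : ℕ)) (by norm_num) hx (s + 2)
    have hpos := hermiteTerm_nonneg zero_le_one hx s 0
    norm_num at hsplit hmono
    linarith
  have hpow : 0 ≤ x ^ s / s.factorial := by positivity
  nlinarith [s.cast_nonneg (α := ℝ)]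

lemma sq_mul_hermiteSeries_one_add_two_le {x : ℝ} (hx : 0 ≤ x) (s : ℕ) :
    x ^ 2 * hermiteSeries 1 (s + 2) x ≤ (s + 3) ^ 2 * hermiteSeries 1 s x := by
  have h₀ := two_mul_mul_hermiteSeries_one_succ_le hx s
  have h₁ := two_mul_mul_hermiteSeries_one_succ_le hx (s + 1)
  push_cast at h₁
  have hΦ := (show 0 ≤ x ^ s / s.factorial by positivity).trans
    (pow_div_factorial_le_hermiteSeries zero_le_one hx s)
  have := s.cast_nonneg (α := ℝ)
  calc x ^ 2 * hermiteSeries 1 (s + 2) x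
      = x / 2 * (2 * x * hermiteSeries 1 (s + 1 + 1) x) := by ring
    _ ≤ x / 2 * ((1 + (s + 1) / 2) * hermiteSeries 1 (s + 1) x) := by gcongr
    _ = (s + 3) / 8 * (2 * x * hermiteSeries 1 (s + 1) x) := by ring
    _ ≤ (s + 3) / 8 * ((1 + s / 2) * hermiteSeries 1 s x) := by gcongr
    _ ≤ (s + 3) ^ 2 * hermiteSeries 1 s x := by
      rw [← mul_assoc]
      gcongr
      nlinarith

lemma hermiteSeries_one_add_two_isBigO (s : ℕ) :
    hermiteSeries 1 (s + 2) =O[atTop] fun x => (x ^ 2)⁻¹ * hermiteSeries 1 s x := by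
  refine .of_bound ((s + 3) ^ 2) ?_
  filter_upwards [eventually_gt_atTop 0] with x hx
  rw [Real.norm_of_nonneg (hermiteSeries_pos zero_le_one hx _).le, norm_mul, norm_inv,
    Real.norm_of_nonneg (hermiteSeries_pos zero_le_one hx _).le, Real.norm_of_nonneg (sq_nonneg x),
    mul_left_comm, le_inv_mul_iff₀ (by positivity)]
  exact sq_mul_hermiteSeries_one_add_two_le hx.le s

/-- The function `hermiteSeries 1 (t + 1)` normalized by its growth `exp (x²) / x ^ t` as
`x → ∞`. -/
noncomputable def hermiteRatio (t : ℕ) (x : ℝ) : ℝ :=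
  hermiteSeries 1 (t + 1) x * x ^ t * Real.exp (-x ^ 2)

lemma hermiteRatio_pos {x : ℝ} (hx : 0 < x) (t : ℕ) : 0 < hermiteRatio t x := by
  have := hermiteSeries_pos zero_le_one hx (t + 1)
  unfold hermiteRatio
  positivity

lemma tendsto_inv_sq_atTop : Tendsto (fun x : ℝ => (x ^ 2)⁻¹) atTop (𝓝 0) :=
  (tendsto_pow_atTop two_ne_zero).inv_tendsto_atTop

lemma tendsto_of_sub_isBigO_inv_sq {f : ℝ → ℝ} {c : ℝ}
    (h : (fun x => f x - c) =O[atTop] fun x => (x ^ 2)⁻¹) : Tendsto f atTop (𝓝 c) :=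
  tendsto_sub_nhds_zero_iff.1 (h.trans_tendsto tendsto_inv_sq_atTop)

lemma two_mul_hermiteRatio_succ_sub (t : ℕ) (x : ℝ) :
    2 * hermiteRatio (t + 1) x - hermiteRatio t x =
      2 * (t + 1) * (hermiteSeries 1 (t + 1 + 2) x * (x ^ t * Real.exp (-x ^ 2))) -
        ((t + 1).factorial : ℝ)⁻¹ * (x ^ (2 * t + 1) * Real.exp (-x ^ 2)) := by
  have hrec := hermiteSeries_recurrence 1 (t + 1) x
  push_cast at hrec
  rw [hermiteRatio, hermiteRatio, hrec]
  ring

lemma hermiteRatio_sub_isBigO_inv_sq (t : ℕ) :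
    (fun x => hermiteRatio t x - √Real.pi / 2 ^ (t + 1)) =O[atTop] fun x => (x ^ 2)⁻¹ := by
  induction t with
  | zero =>
    refine integral_exp_neg_sq_sub_isBigO_inv_sq.congr_left fun x => ?_
    rw [← exp_neg_sq_mul_hermiteSeries_one_one, hermiteRatio]
    ring
  | succ t ih =>
    have hbdd : hermiteRatio t =O[atTop] fun _ => (1 : ℝ) :=
      (tendsto_of_sub_isBigO_inv_sq ih).isBigO_one ℝ
    have hnext : (fun x => hermiteSeries 1 (t + 1 + 2) x * (x ^ t * Real.exp (-x ^ 2))) =O[atTop]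
        fun x => (x ^ 2)⁻¹ := by
      have h := (hermiteSeries_one_add_two_isBigO (t + 1)).mul
        (isBigO_refl (fun x : ℝ => x ^ t * Real.exp (-x ^ 2)) atTop)
      refine h.trans ?_
      refine ((isBigO_refl (fun x : ℝ => (x ^ 2)⁻¹) atTop).mul hbdd).congr
        (fun x => ?_) (fun x => mul_one _)
      rw [hermiteRatio]
      ring
    have hstep := (hnext.const_mul_left (2 * (t + 1))).sub
      ((pow_mul_exp_neg_sq_isBigO_inv_sq (2 * t + 1)).const_mul_left ((t + 1).factorial : ℝ)⁻¹)
    refine ((hstep.add ih).const_mul_left (1 / 2)).congr_left fun x => ?_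
    rw [← two_mul_hermiteRatio_succ_sub]
    ring

lemma tendsto_hermiteRatio (t : ℕ) :
    Tendsto (hermiteRatio t) atTop (𝓝 (√Real.pi / 2 ^ (t + 1))) :=
  tendsto_of_sub_isBigO_inv_sq (hermiteRatio_sub_isBigO_inv_sq t)

end HermiteSeriesAsymptotics

section Contraction

lemma exists_fixedPt_of_contracting {T : ℝ → ℝ} {r L : ℝ} (hr : 0 < r) (hL : L ≤ 1 / 2)
    (hT : ∀ x ∈ Icc 0 r, ∀ y ∈ Icc 0 r, |T x - T y| ≤ L * |x - y|)
    (hpos : ∀ x ∈ Icc 0 r, 0 < T x) (hT₀ : T 0 < r / 2) :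
    ∃ e ∈ Ioo 0 r, (∀ x ∈ Icc 0 r, T x = x ↔ x = e) ∧ |e - T 0| ≤ 2 * L * T 0 := by
  have h0mem : (0 : ℝ) ∈ Icc 0 r := left_mem_Icc.2 hr.le
  have hhalf {x y : ℝ} (hx : x ∈ Icc 0 r) (hy : y ∈ Icc 0 r) : |T x - T y| ≤ |x - y| / 2 :=
    (hT x hx y hy).trans (by nlinarith [abs_nonneg (x - y)])
  have hlt {x : ℝ} (hx : x ∈ Icc 0 r) : T x < r := by
    have h := (le_abs_self _).trans (hhalf hx h0mem)
    rw [sub_zero, abs_of_nonneg hx.1] at h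
    linarith [hx.2]
  have hcont : ContinuousOn T (Icc 0 r) :=
    (LipschitzOnWith.of_dist_le' hT).continuousOn
  obtain ⟨e, he, hfix⟩ := exists_mem_Icc_isFixedPt_of_mapsTo hcont hr.le
    fun x hx => ⟨(hpos x hx).le, (hlt hx).le⟩
  have hfix : T e = e := hfix
  refine ⟨e, ⟨hfix ▸ hpos e he, hfix ▸ hlt he⟩, fun x hx => ⟨fun hx' => ?_, fun h => h ▸ hfix⟩, ?_⟩
  · have h := hhalf hx he
    rw [hx', hfix] at h
    exact sub_eq_zero.1 (abs_eq_zero.1 (by linarith [abs_nonneg (x - e)]))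
  · have hle := hT e he 0 h0mem
    have h := (le_abs_self _).trans (hhalf he h0mem)
    have hL₀ := (abs_nonneg _).trans (hT r (right_mem_Icc.2 hr.le) 0 h0mem)
    rw [sub_zero, abs_of_nonneg hr.le] at hL₀
    rw [hfix, sub_zero, abs_of_nonneg he.1] at hle h
    calc |e - T 0| ≤ L * e := hle
      _ ≤ L * (2 * T 0) := by
        gcongr
        · exact nonneg_of_mul_nonneg_left hL₀ hr
        · linarith
      _ = 2 * L * T 0 := by ring

lemma abs_div_sub_div_le {p q G H M g Λ d : ℝ} (hp : |p| ≤ M) (hpq : |p - q| ≤ M * d)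
    (hG : 0 < G) (hH : 0 < H) (hGg : G⁻¹ ≤ g) (hHg : H⁻¹ ≤ g) (hGH : |G - H| ≤ Λ * d) :
    |p / G - q / H| ≤ M * (g + Λ * g ^ 2) * d := by
  have hsplit : p / G - q / H = (p - q) * H⁻¹ + -(p * (G - H) * (G⁻¹ * H⁻¹)) := by
    field_simp
    ring
  have hHpos : 0 < H⁻¹ := inv_pos.2 hH
  have hGpos : 0 < G⁻¹ := inv_pos.2 hG
  rw [hsplit]
  refine (abs_add_le _ _).trans ?_
  rw [abs_neg, abs_mul, abs_mul, abs_mul, abs_of_pos hHpos, abs_of_pos (mul_pos hGpos hHpos)]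
  calc |p - q| * H⁻¹ + |p| * |G - H| * (G⁻¹ * H⁻¹)
      ≤ M * d * g + M * (Λ * d) * (g * g) := by
        have := (abs_nonneg _).trans hpq
        have := (abs_nonneg _).trans hp
        have := (abs_nonneg _).trans hGH
        have : 0 ≤ g := hHpos.le.trans hHg
        gcongr
    _ = M * (g + Λ * g ^ 2) * d := by ring

lemma isBigO_div_sub_div {α : Type*} {l : Filter α} {f g k : α → ℝ} {A B : ℝ} (hB : B ≠ 0)
    (hf : (fun x => f x - A) =O[l] k) (hg : (fun x => g x - B) =O[l] k)
    (hgB : Tendsto g l (𝓝 B)) : (fun x => f x / g x - A / B) =O[l] k := by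
  have hinv : (fun x => (g x)⁻¹) =O[l] fun _ => (1 : ℝ) := (hgB.inv₀ hB).isBigO_one ℝ
  have h : (fun x => ((f x - A) - A / B * (g x - B)) * (g x)⁻¹) =O[l] k := by
    simpa using (hf.sub (hg.const_mul_left (A / B))).mul hinv
  refine h.congr' ?_ .rfl
  filter_upwards [hgB.eventually_ne hB] with x hx
  field_simp
  ring

end Contraction

section HermiteHead

variable (n s : ℕ)

/-- The sum of the first `n + 1` terms of `hermiteSeries (-n - e) s x`, divided by
`4 ^ (n + 1) * (-n - e)ₙ * x ^ (2 * n + s)` and written as a polynomial in `w = x⁻²`. -/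
noncomputable def hermiteHead (e w : ℝ) : ℝ :=
  (∑ k ∈ Finset.range (n + 1),
    4 ^ k * (ascPochhammer ℝ k).eval (-n - e) / (2 * k + s).factorial * w ^ (n - k)) /
      (4 ^ (n + 1) * (ascPochhammer ℝ n).eval (-n - e))

variable {n s} {e x : ℝ}

lemma sum_hermiteTerm_eq_pow_mul (a : ℝ) (hx : x ≠ 0) :
    ∑ k ∈ Finset.range (n + 1), hermiteTerm a s x k =
      x ^ (s + 2 * n) * ∑ k ∈ Finset.range (n + 1),
        4 ^ k * (ascPochhammer ℝ k).eval a / (2 * k + s).factorial * (x ^ 2)⁻¹ ^ (n - k) := by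
  rw [Finset.mul_sum]
  refine Finset.sum_congr rfl fun k hk => ?_
  have hpow : x ^ (2 * k + s) = x ^ (s + 2 * n) * (x ^ 2)⁻¹ ^ (n - k) := by
    obtain ⟨j, rfl⟩ := Nat.exists_eq_add_of_le (Nat.lt_succ_iff.1 (Finset.mem_range.1 hk))
    rw [Nat.add_sub_cancel_left, inv_pow, ← pow_mul]
    field_simp
    ring
  rw [hermiteTerm, hpow]
  ring

lemma hermiteSeries_eq_head_sub (he : |e| < 1) (hx : x ≠ 0) :
    hermiteSeries (-n - e) s x = 4 ^ (n + 1) * (ascPochhammer ℝ n).eval (-n - e) *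
      (x ^ (s + 2 * n) * hermiteHead n s e (x ^ 2)⁻¹ -
        e * hermiteSeries (1 - e) (s + 2 * n + 2) x) := by
  have hne := ascPochhammer_eval_neg_natCast_sub_ne_zero (n := n) he
  rw [hermiteSeries_eq_sum_add _ s x (n + 1), sum_hermiteTerm_eq_pow_mul _ hx, hermiteHead,
    ascPochhammer_succ_eval, show -n - e + (n + 1 : ℕ) = 1 - e by push_cast; ring,
    show s + 2 * (n + 1) = s + 2 * n + 2 by ring]
  field_simp
  ring

lemma hermiteHead_zero_right (he : |e| < 1) :
    hermiteHead n s e 0 = 1 / (4 * (s + 2 * n).factorial) := by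
  have hne := ascPochhammer_eval_neg_natCast_sub_ne_zero (n := n) he
  rw [hermiteHead, Finset.sum_eq_single_of_mem n (Finset.self_mem_range_succ n), add_comm s,
    Nat.sub_self, pow_zero]
  · field_simp
    ring
  · intro k hk hkn
    have : n - k ≠ 0 := by have := Finset.mem_range.1 hk; omega
    simp [this]

lemma exists_lipschitzOnWith_hermiteHead (n s : ℕ) :
    ∃ K, LipschitzOnWith K (fun p : ℝ × ℝ => hermiteHead n s p.1 p.2)
      (Icc (-(1 / 2)) (1 / 2) ×ˢ Icc 0 1) := by
  have hpoch (k : ℕ) : ContDiff ℝ 1 fun p : ℝ × ℝ => (ascPochhammer ℝ k).eval (-n - p.1) :=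
    ((ascPochhammer ℝ k).contDiff_aeval 1).comp (by fun_prop)
  refine ContDiffOn.exists_lipschitzOnWith (n := 1) (ContDiffOn.div ?_ ?_ fun p hp => ?_)
    one_ne_zero ((convex_Icc _ _).prod (convex_Icc _ _)) (isCompact_Icc.prod isCompact_Icc)
  · exact (ContDiff.sum fun k _ => by fun_prop).contDiffOn
  · exact (contDiff_const.mul (hpoch n)).contDiffOn
  · have he : |p.1| < 1 := abs_lt.2 ⟨by linarith [hp.1.1], by linarith [hp.1.2]⟩
    exact mul_ne_zero (by positivity) (ascPochhammer_eval_neg_natCast_sub_ne_zero he)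

end HermiteHead

section Shift

lemma exists_hermiteHead_bound (n s : ℕ) :
    ∃ M : ℝ, ∀ w ∈ Icc (0 : ℝ) 1, ∀ e ∈ Icc (-(1 / 2) : ℝ) (1 / 2),
      |hermiteHead n s e w| ≤ M ∧
      |hermiteHead n s e w - 1 / (4 * (s + 2 * n).factorial)| ≤ M * w ∧
      ∀ e' ∈ Icc (-(1 / 2) : ℝ) (1 / 2),
        |hermiteHead n s e w - hermiteHead n s e' w| ≤ M * |e - e'| := by
  obtain ⟨K, hK⟩ := exists_lipschitzOnWith_hermiteHead n s
  set c : ℝ := 1 / (4 * (s + 2 * n).factorial)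
  have hc : 0 ≤ c := by positivity
  refine ⟨K + c, fun w hw e he => ?_⟩
  have hlim : |hermiteHead n s e w - c| ≤ K * w := by
    have h := hK.dist_le_mul (e, w) ⟨he, hw⟩ (e, 0) ⟨he, left_mem_Icc.2 zero_le_one⟩
    have he' : |e| < 1 := abs_lt.2 ⟨by linarith [he.1], by linarith [he.2]⟩
    simpa [Real.dist_eq, hermiteHead_zero_right he', abs_of_nonneg hw.1, max_eq_right hw.1,
      Prod.dist_eq, c] using h
  refine ⟨?_, hlim.trans (by nlinarith [hw.1]), fun e' he' => ?_⟩
  · have htri := abs_sub_abs_le_abs_sub (hermiteHead n s e w) c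
    rw [abs_of_nonneg hc] at htri
    nlinarith [hw.2, K.coe_nonneg]
  · have h := hK.dist_le_mul (e, w) ⟨he, hw⟩ (e', w) ⟨he', hw⟩
    simp only [Real.dist_eq, Prod.dist_eq, sub_self, abs_zero, abs_nonneg, sup_of_le_left] at h
    exact h.trans (by gcongr; linarith)

/-- The map whose fixed points `e` with `|e| ≤ 1 / 2` are the solutions of
`hermiteSeries (-n - e) s x = 0`. -/
noncomputable def shiftMap (n s : ℕ) (x e : ℝ) : ℝ :=
  hermiteHead n s e (x ^ 2)⁻¹ / (hermiteSeries (1 - e) (s + 2 * n + 2) x / x ^ (s + 2 * n))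

variable {x e e' : ℝ}

lemma inv_sq_mem_Icc (hx : 1 ≤ x) : (x ^ 2)⁻¹ ∈ Icc (0 : ℝ) 1 :=
  ⟨by positivity, inv_le_one_of_one_le₀ (one_le_pow₀ hx)⟩

lemma hermiteSeries_eq_zero_iff_shiftMap (n s : ℕ) (hx : 0 < x)
    (he : e ∈ Icc (-(1 / 2) : ℝ) (1 / 2)) :
    hermiteSeries (-n - e) s x = 0 ↔ shiftMap n s x e = e := by
  have he' : |e| < 1 := abs_lt.2 ⟨by linarith [he.1], by linarith [he.2]⟩
  have hΦ := hermiteSeries_pos (a := 1 - e) (by linarith [he.2]) hx (s + 2 * n + 2)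
  rw [hermiteSeries_eq_head_sub he' hx.ne', mul_eq_zero_iff_left
    (mul_ne_zero (by positivity) (ascPochhammer_eval_neg_natCast_sub_ne_zero he')), shiftMap,
    div_div_eq_mul_div, div_eq_iff hΦ.ne', sub_eq_zero, mul_comm (x ^ _)]

lemma inv_hermiteSeries_div_pow_le (m : ℕ) (hx : 0 < x) (he : e ∈ Icc (0 : ℝ) (1 / 2)) :
    (hermiteSeries (1 - e) (m + 2) x / x ^ m)⁻¹ ≤
      (hermiteRatio (m + 2) x)⁻¹ * (x ^ (2 * m + 3) * Real.exp (-x ^ 2)) := by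
  have hΦ := hermiteSeries_pos zero_le_one hx (m + 3)
  have hle : hermiteSeries 1 (m + 3) x / x ≤ hermiteSeries (1 - e) (m + 2) x := by
    rw [div_le_iff₀' hx]
    refine (hermiteSeries_one_le_half hx.le (m + 2)).trans ?_
    gcongr
    exact hermiteSeries_mono (by norm_num) (by linarith [he.2]) hx.le _
  calc (hermiteSeries (1 - e) (m + 2) x / x ^ m)⁻¹
      ≤ (hermiteSeries 1 (m + 3) x / x / x ^ m)⁻¹ := by gcongr
    _ = (hermiteRatio (m + 2) x)⁻¹ * (x ^ (2 * m + 3) * Real.exp (-x ^ 2)) := by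
      rw [hermiteRatio]
      field_simp
      ring

lemma abs_hermiteSeries_div_pow_sub_le (m : ℕ) (hx : 0 < x) (he : e ∈ Icc (0 : ℝ) (1 / 2))
    (he' : e' ∈ Icc (0 : ℝ) (1 / 2)) :
    |hermiteSeries (1 - e) (m + 2) x / x ^ m - hermiteSeries (1 - e') (m + 2) x / x ^ m| ≤
      x * hermiteSeries 1 (m + 1) x / x ^ m * |e - e'| := by
  wlog hee : e ≤ e' generalizing e e'
  · rw [abs_sub_comm, abs_sub_comm e]
    exact this he' he (le_of_not_ge hee)
  have hsub := hermiteSeries_sub_le (a := 1 - e') (b := 1 - e) (c := 1) (by linarith [he'.2])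
    (by linarith) (by linarith [he.1]) le_rfl hx.le (m + 1)
  have hmono := hermiteSeries_mono (a := 1 - e') (b := 1 - e) (by linarith [he'.2])
    (by linarith) hx.le (m + 2)
  rw [← sub_div, abs_div, abs_of_nonneg (sub_nonneg.2 hmono), abs_of_pos (pow_pos hx m),
    abs_sub_comm, abs_of_nonneg (sub_nonneg.2 hee), div_mul_eq_mul_div]
  gcongr
  linarith

lemma exists_shiftMap_lipschitz (n s : ℕ) :
    ∃ L : ℝ → ℝ, L =O[atTop] (fun x => (x ^ 2)⁻¹) ∧ ∀ᶠ x in atTop,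
      ∀ e ∈ Icc (0 : ℝ) (1 / 2), ∀ e' ∈ Icc (0 : ℝ) (1 / 2),
        |shiftMap n s x e - shiftMap n s x e'| ≤ L x * |e - e'| := by
  obtain ⟨M, hM⟩ := exists_hermiteHead_bound n s
  set m := s + 2 * n
  refine ⟨fun x => M * ((hermiteRatio (m + 2) x)⁻¹ * (x ^ (2 * m + 3) * Real.exp (-x ^ 2)) +
    hermiteRatio m x * (hermiteRatio (m + 2) x)⁻¹ ^ 2 * (x ^ (2 * m + 7) * Real.exp (-x ^ 2))),
    ?_, ?_⟩
  · have hinv := (tendsto_hermiteRatio (m + 2)).inv₀ (by positivity)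
    have hfst := (hinv.isBigO_one ℝ).mul (pow_mul_exp_neg_sq_isBigO_inv_sq (2 * m + 3))
    have hsnd := (((tendsto_hermiteRatio m).mul (hinv.pow 2)).isBigO_one ℝ).mul
      (pow_mul_exp_neg_sq_isBigO_inv_sq (2 * m + 7))
    simp only [one_mul] at hfst hsnd
    exact (hfst.add hsnd).const_mul_left M
  filter_upwards [eventually_ge_atTop 1] with x hx1 e he e' he'
  have hx : 0 < x := by linarith
  have hsub : Icc (0 : ℝ) (1 / 2) ⊆ Icc (-(1 / 2)) (1 / 2) := Icc_subset_Icc_left (by norm_num)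
  have hw := inv_sq_mem_Icc hx1
  obtain ⟨hbdd, -, hlip⟩ := hM _ hw e (hsub he)
  have hG {t : ℝ} (ht : t ∈ Icc (0 : ℝ) (1 / 2)) : 0 < hermiteSeries (1 - t) (m + 2) x / x ^ m :=
    div_pos (hermiteSeries_pos (by linarith [ht.2]) hx _) (by positivity)
  refine (abs_div_sub_div_le hbdd (hlip e' (hsub he')) (hG he) (hG he')
    (inv_hermiteSeries_div_pow_le m hx he) (inv_hermiteSeries_div_pow_le m hx he')
    (abs_hermiteSeries_div_pow_sub_le m hx he he')).trans_eq ?_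
  have := (hermiteRatio_pos hx (m + 2)).ne'
  congr 3
  rw [hermiteRatio.eq_def m]
  field_simp
  ring

lemma eventually_shiftMap_pos (n s : ℕ) :
    ∀ᶠ x in atTop, ∀ e ∈ Icc (-(1 / 2) : ℝ) (1 / 2), 0 < shiftMap n s x e := by
  obtain ⟨M, hM⟩ := exists_hermiteHead_bound n s
  have hinv : Tendsto (fun x : ℝ => M * (x ^ 2)⁻¹) atTop (𝓝 (M * 0)) :=
    tendsto_inv_sq_atTop.const_mul M
  have hc : M * 0 < 1 / (4 * (s + 2 * n).factorial) := by
    rw [mul_zero]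
    positivity
  filter_upwards [eventually_ge_atTop 1, hinv.eventually_lt_const hc] with x hx1 hlt e he
  have hx : 0 < x := by linarith
  have hw := inv_sq_mem_Icc hx1
  have hhead : 0 < hermiteHead n s e (x ^ 2)⁻¹ := by
    linarith [(abs_le.1 (hM _ hw e he).2.1).1]
  exact div_pos hhead (div_pos (hermiteSeries_pos (by linarith [he.2]) hx _) (by positivity))

/-- The leading term of the shift `e` for which `x` is a zero of the `m`-th Hermite function of
perturbed degree `m + 2 * e`, as `x → ∞`. -/
noncomputable def leadingShift (m : ℕ) (x : ℝ) : ℝ :=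
  2 ^ m / (m.factorial * √Real.pi) * (x ^ (2 * m + 1) * Real.exp (-x ^ 2))

lemma leadingShift_pos (m : ℕ) (hx : 0 < x) : 0 < leadingShift m x := by
  unfold leadingShift
  positivity

lemma shiftMap_zero_sub_leadingShift_isBigO (n s : ℕ) :
    (fun x => shiftMap n s x 0 - leadingShift (s + 2 * n) x) =O[atTop]
      fun x => (x ^ 2)⁻¹ * leadingShift (s + 2 * n) x := by
  obtain ⟨M, hM⟩ := exists_hermiteHead_bound n s
  set m := s + 2 * n
  set D : ℝ → ℝ := fun x => x ^ (2 * m + 1) * Real.exp (-x ^ 2)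
  have hhead : (fun x => hermiteHead n s 0 (x ^ 2)⁻¹ - 1 / (4 * m.factorial)) =O[atTop]
      fun x => (x ^ 2)⁻¹ := by
    refine .of_bound M ?_
    filter_upwards [eventually_ge_atTop 1] with x hx
    have hw := inv_sq_mem_Icc hx
    rw [Real.norm_eq_abs, Real.norm_of_nonneg hw.1]
    exact (hM _ hw 0 (by norm_num)).2.1
  have hquot := isBigO_div_sub_div (by positivity) hhead (hermiteRatio_sub_isBigO_inv_sq (m + 1))
    (tendsto_hermiteRatio (m + 1))
  have hscale : (fun x => (x ^ 2)⁻¹ * D x) =O[atTop] fun x => (x ^ 2)⁻¹ * leadingShift m x :=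
    (isBigO_refl _ _).mul ((isBigO_refl D atTop).const_mul_right (by positivity))
  refine ((hquot.mul (isBigO_refl D atTop)).trans hscale).congr' ?_ .rfl
  filter_upwards [eventually_gt_atTop 0] with x hx
  have hΦ := hermiteSeries_pos zero_le_one hx (m + 2)
  rw [shiftMap, leadingShift, hermiteRatio, sub_zero, sub_mul, show s + 2 * n = m from rfl]
  simp only [D]
  congr 1
  · field_simp
    ring
  · field_simp
    ring

lemma leadingShift_isBigO_inv_sq (m : ℕ) : leadingShift m =O[atTop] fun x => (x ^ 2)⁻¹ :=
  (pow_mul_exp_neg_sq_isBigO_inv_sq (2 * m + 1)).const_mul_left _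

lemma shiftMap_zero_isBigO (n s : ℕ) :
    (fun x => shiftMap n s x 0) =O[atTop] leadingShift (s + 2 * n) := by
  have hinv := (tendsto_inv_sq_atTop.isBigO_one ℝ).mul
    (isBigO_refl (leadingShift (s + 2 * n)) atTop)
  simp only [one_mul] at hinv
  simpa using ((shiftMap_zero_sub_leadingShift_isBigO n s).trans hinv).add
    (isBigO_refl (leadingShift (s + 2 * n)) atTop)

lemma exists_shift_near_shiftMap_zero {n s : ℕ} {L : ℝ} (hx : 0 < x) (hL : L ≤ 1 / 2)
    (hlip : ∀ e ∈ Icc (0 : ℝ) (1 / 2), ∀ e' ∈ Icc (0 : ℝ) (1 / 2),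
      |shiftMap n s x e - shiftMap n s x e'| ≤ L * |e - e'|)
    (hpos : ∀ e ∈ Icc (-(1 / 2) : ℝ) (1 / 2), 0 < shiftMap n s x e)
    (hzero : shiftMap n s x 0 < 1 / 2 / 2) :
    ∃ e ∈ Ioo (0 : ℝ) (1 / 2),
      (∀ ε ∈ Icc (-(1 / 2) : ℝ) (1 / 2), (hermiteSeries (-n - ε) s x = 0 ↔ ε = e)) ∧
      |e - shiftMap n s x 0| ≤ 2 * L * shiftMap n s x 0 := by
  obtain ⟨e, he, huniq, hdist⟩ := exists_fixedPt_of_contracting (by norm_num) hL hlip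
    (fun t ht => hpos t ⟨by linarith [ht.1], ht.2⟩) hzero
  refine ⟨e, he, fun ε hε => ?_, hdist⟩
  rw [hermiteSeries_eq_zero_iff_shiftMap n s hx hε]
  rcases le_total 0 ε with hε₀ | hε₀
  · exact huniq ε ⟨hε₀, hε.2⟩
  · have := hpos ε hε
    exact ⟨fun h => by linarith, fun h => by linarith [he.1]⟩

lemma exists_shift_of_hermiteSeries_eq_zero (n s : ℕ) :
    ∃ e : ℝ → ℝ,
      (∀ᶠ x in atTop, e x ∈ Ioo 0 (1 / 2) ∧ ∀ ε ∈ Icc (-(1 / 2) : ℝ) (1 / 2),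
        (hermiteSeries (-n - ε) s x = 0 ↔ ε = e x)) ∧
      (fun x => e x - leadingShift (s + 2 * n) x) =O[atTop]
        fun x => (x ^ 2)⁻¹ * leadingShift (s + 2 * n) x := by
  obtain ⟨L, hLO, hL⟩ := exists_shiftMap_lipschitz n s
  have hLsmall := (hLO.trans_tendsto tendsto_inv_sq_atTop).eventually_le_const
    (by norm_num : (0 : ℝ) < 1 / 2)
  have hTsmall := (((shiftMap_zero_isBigO n s).trans
    (leadingShift_isBigO_inv_sq _)).trans_tendsto tendsto_inv_sq_atTop).eventually_lt_const
    (by norm_num : (0 : ℝ) < 1 / 2 / 2)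
  have hfix : ∀ᶠ x in atTop, ∃ e ∈ Ioo (0 : ℝ) (1 / 2),
      (∀ ε ∈ Icc (-(1 / 2) : ℝ) (1 / 2), (hermiteSeries (-n - ε) s x = 0 ↔ ε = e)) ∧
      |e - shiftMap n s x 0| ≤ 2 * L x * shiftMap n s x 0 := by
    filter_upwards [hL, hLsmall, hTsmall, eventually_shiftMap_pos n s, eventually_gt_atTop 0]
      with x hLx hLx' hTx hpos hx
    exact exists_shift_near_shiftMap_zero hx hLx' hLx hpos hTx
  obtain ⟨e, he⟩ := hfix.choice
  refine ⟨e, he.mono fun x hx => ⟨hx.1, hx.2.1⟩, ?_⟩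
  have hdist : (fun x => e x - shiftMap n s x 0) =O[atTop]
      fun x => (x ^ 2)⁻¹ * leadingShift (s + 2 * n) x := by
    refine IsBigO.trans (.of_norm_eventuallyLE (he.mono fun x hx => hx.2.2)) ?_
    exact (hLO.const_mul_left 2).mul (shiftMap_zero_isBigO n s)
  simpa using hdist.add (shiftMap_zero_sub_leadingShift_isBigO n s)

end Shift

section SturmLiouville

/-- `u`, with derivative `u'`, solves the equation `u'' = q u` on `s`. -/
def IsSchrodingerSolution (q u u' : ℝ → ℝ) (s : Set ℝ) : Prop :=
  ∀ x ∈ s, HasDerivAt u (u' x) x ∧ HasDerivAt u' (q x * u x) x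

variable {V q u u' v v' w w' : ℝ → ℝ} {s : Set ℝ} {a b h lam R : ℝ}

lemma IsSchrodingerSolution.mono {t : Set ℝ} (hu : IsSchrodingerSolution q u u' s) (hts : t ⊆ s) :
    IsSchrodingerSolution q u u' t :=
  fun x hx => hu x (hts hx)

lemma IsSchrodingerSolution.continuous (hu : IsSchrodingerSolution q u u' univ) : Continuous u :=
  continuous_iff_continuousAt.2 fun x => (hu x trivial).1.continuousAt

lemma IsSchrodingerSolution.contDiff (hu : IsSchrodingerSolution q u u' univ)
    (hq : Continuous q) : ContDiff ℝ 2 u := by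
  have hderiv : deriv u = u' := funext fun x => (hu x trivial).1.deriv
  have hderiv' : deriv u' = fun x => q x * u x := funext fun x => (hu x trivial).2.deriv
  rw [show (2 : WithTop ℕ∞) = 1 + 1 by norm_num, contDiff_succ_iff_deriv, hderiv,
    contDiff_one_iff_deriv, hderiv']
  exact ⟨fun x => (hu x trivial).1.differentiableAt, by simp,
    fun x => (hu x trivial).2.differentiableAt, hq.mul hu.continuous⟩

lemma IsSchrodingerSolution.exists_wronskian_eq (hs : IsOpen s) (hs' : IsPreconnected s)
    (hu : IsSchrodingerSolution q u u' s) (hv : IsSchrodingerSolution q v v' s) :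
    ∃ c, ∀ x ∈ s, u x * v' x - u' x * v x = c := by
  have hderiv : ∀ x ∈ s, HasDerivAt (fun x => u x * v' x - u' x * v x) 0 x := fun x hx =>
    (((hu x hx).1.mul (hv x hx).2).sub ((hu x hx).2.mul (hv x hx).1)).congr_deriv (by ring)
  exact hs.exists_is_const_of_deriv_eq_zero hs'
    (fun x hx => (hderiv x hx).differentiableAt.differentiableWithinAt)
    (fun x hx => (hderiv x hx).deriv)

lemma IsSchrodingerSolution.exists_eq_linear_combination
    (hu : IsSchrodingerSolution q u u' (Ioo a b)) (hcont : ContinuousOn u (Icc a b))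
    (hv : IsSchrodingerSolution q v v' univ) (hw : IsSchrodingerSolution q w w' univ)
    {c : ℝ} (hc : c ∈ Ioo a b) (hvw : v c * w' c - v' c * w c ≠ 0) :
    ∃ α β : ℝ, ∀ x ∈ Icc a b, u x = α * v x + β * w x := by
  have hvI := hv.mono (subset_univ (Ioo a b))
  have hwI := hw.mono (subset_univ (Ioo a b))
  obtain ⟨W, hW⟩ := hvI.exists_wronskian_eq isOpen_Ioo isPreconnected_Ioo hwI
  obtain ⟨A, hA⟩ := hu.exists_wronskian_eq isOpen_Ioo isPreconnected_Ioo hwI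
  obtain ⟨B, hB⟩ := hu.exists_wronskian_eq isOpen_Ioo isPreconnected_Ioo hvI
  rw [hW c hc] at hvw
  refine ⟨A / W, -B / W, ?_⟩
  have heq : EqOn u (fun x => A / W * v x + -B / W * w x) (Ioo a b) := by
    intro x hx
    have hsplit : u x * W = A * v x - B * w x := by
      rw [← hW x hx, ← hA x hx, ← hB x hx]
      ring
    field_simp
    linear_combination hsplit
  have hv' := hv.continuous
  have hw' := hw.continuous
  exact heq.of_subset_closure hcont (by fun_prop) Ioo_subset_Icc_self
    (closure_Ioo (hc.1.trans hc.2).ne).ge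

lemma IsEigenfunctionPD.isSchrodingerSolution (hh : h ≠ 0)
    (hu : IsEigenfunctionPD V a b h lam u) :
    IsSchrodingerSolution (fun x => (V x - lam) / h ^ 2) u (deriv u) (Ioo a b) := by
  intro x hx
  obtain ⟨-, hdiff, -, -, hode⟩ := hu
  have hopen : ContDiffOn ℝ 2 u (Ioo a b) := hdiff.mono Ioo_subset_Icc_self
  have hopen' : ContDiffOn ℝ 1 (deriv u) (Ioo a b) :=
    hopen.deriv_of_isOpen isOpen_Ioo (by norm_num)
  have hnhds := isOpen_Ioo.mem_nhds hx
  refine ⟨((hopen.differentiableOn (by norm_num)).differentiableAt hnhds).hasDerivAt,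
    ((hopen'.differentiableOn (by norm_num)).differentiableAt hnhds).hasDerivAt.congr_deriv ?_⟩
  field_simp
  linear_combination -hode x hx

lemma IsSchrodingerSolution.isEigPD (hV : Continuous V) (hh : h ≠ 0)
    (hu : IsSchrodingerSolution (fun x => (V x - lam) / h ^ 2) u u' univ)
    (ha : u a = 0) (hb : u b = 0) (hne : ∃ x ∈ Icc a b, u x ≠ 0) : IsEigPD V a b h lam := by
  refine ⟨u, hne, (hu.contDiff (by fun_prop)).contDiffOn, ha, hb, fun x _ => ?_⟩
  have hderiv : deriv u = u' := funext fun x => (hu x trivial).1.deriv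
  rw [hderiv, (hu x trivial).2.deriv]
  field_simp
  ring

lemma isEigPD_symm_iff_of_even_of_odd (hV : Continuous V) (hh : h ≠ 0) (hR : 0 < R)
    (hv : IsSchrodingerSolution (fun x => (V x - lam) / h ^ 2) v v' univ) (hv_even : v.Even)
    (hv₀ : v 0 ≠ 0) (hw : IsSchrodingerSolution (fun x => (V x - lam) / h ^ 2) w w' univ)
    (hw_odd : w.Odd) (hw₀ : w' 0 ≠ 0) :
    IsEigPD V (-R) R h lam ↔ v R = 0 ∨ w R = 0 := by
  have h0mem : (0 : ℝ) ∈ Ioo (-R) R := ⟨by linarith, hR⟩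
  have hRle : -R ≤ R := by linarith
  constructor
  · rintro ⟨u, hu⟩
    have hW : v 0 * w' 0 - v' 0 * w 0 ≠ 0 := by simp [hw_odd.map_zero, hv₀, hw₀]
    obtain ⟨α, β, hαβ⟩ := (hu.isSchrodingerSolution hh).exists_eq_linear_combination
      hu.2.1.continuousOn hv hw h0mem hW
    obtain ⟨⟨x₀, hx₀, hux₀⟩, -, hleft, hright, -⟩ := hu
    rw [hαβ _ (left_mem_Icc.2 hRle), hv_even R, hw_odd R] at hleft
    rw [hαβ _ (right_mem_Icc.2 hRle)] at hright
    by_contra! hne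
    have hα : α = 0 := (mul_eq_zero_iff_right hne.1).1 (by linarith)
    have hβ : β = 0 := (mul_eq_zero_iff_right hne.2).1 (by linarith)
    exact hux₀ (by simp [hαβ x₀ hx₀, hα, hβ])
  · rintro (hvR | hwR)
    · exact hv.isEigPD hV hh (by rw [hv_even, hvR]) hvR ⟨0, Ioo_subset_Icc_self h0mem, hv₀⟩
    · have hne : ∀ᶠ x in 𝓝[≠] 0, x ∈ Icc (-R) R ∧ w x ≠ 0 :=
        (eventually_nhdsWithin_of_eventually_nhds
          (Icc_mem_nhds h0mem.1 h0mem.2)).and ((hw 0 trivial).1.eventually_ne hw₀)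
      exact hw.isEigPD hV hh (by rw [hw_odd, hwR, neg_zero]) hwR hne.exists

end SturmLiouville

section HarmonicOscillator

variable {h : ℝ}

lemma isSchrodingerSolution_exp_mul_comp {w w' : ℝ → ℝ} {κ : ℝ} (hh : 0 < h)
    (hw : ∀ x, HasDerivAt w (w' x) x)
    (hw' : ∀ x, HasDerivAt w' (κ * w x + 2 * x * w' x) x) :
    IsSchrodingerSolution (fun x => (x ^ 2 - h * (1 - κ)) / h ^ 2)
      (fun x => Real.exp (-x ^ 2 / (2 * h)) * w (x / √h))
      (fun x => Real.exp (-x ^ 2 / (2 * h)) * (-(x / h) * w (x / √h) + w' (x / √h) / √h)) univ := by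
  have hsq : √h ^ 2 = h := Real.sq_sqrt hh.le
  have hexp (x : ℝ) : HasDerivAt (fun x : ℝ => Real.exp (-x ^ 2 / (2 * h)))
      (Real.exp (-x ^ 2 / (2 * h)) * -(x / h)) x := by
    refine ((hasDerivAt_pow 2 x).neg.div_const (2 * h)).exp.congr_deriv ?_
    simp only [Pi.neg_apply]
    field_simp
    norm_num [mul_comm]
  have hlin (x : ℝ) : HasDerivAt (fun x : ℝ => x / √h) (1 / √h) x := (hasDerivAt_id x).div_const _
  have hneg (x : ℝ) : HasDerivAt (fun x : ℝ => -(x / h)) (-(1 / h)) x :=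
    ((hasDerivAt_id x).div_const h).neg
  have hcomp (x : ℝ) := (hw (x / √h)).comp x (hlin x)
  have hcomp' (x : ℝ) := (hw' (x / √h)).comp x (hlin x)
  refine fun x _ => ⟨((hexp x).mul (hcomp x)).congr_deriv ?_,
    ((hexp x).mul (((hneg x).mul (hcomp x)).add ((hcomp' x).div_const _))).congr_deriv ?_⟩
  · simp only [Function.comp_apply]
    ring
  · simp only [Pi.add_apply, Pi.mul_apply, Function.comp_apply]
    have hpos : 0 < √h := Real.sqrt_pos.2 hh
    generalize √h = r at *
    subst hsq
    field_simp
    ring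

/-- The set of Dirichlet eigenvalues of `-d²/dy² + y²` on `(-x, x)`, described by the vanishing at
`x` of the even (`s = 0`) or of the odd (`s = 1`) solution. -/
def hermiteSpectrum (x : ℝ) : Set ℝ :=
  {μ | ∃ s : ℕ, s < 2 ∧ hermiteSeries ((2 * s + 1 - μ) / 4) s x = 0}

lemma isEigPD_sq_iff {R : ℝ} (hh : 0 < h) (hR : 0 < R) (μ : ℝ) :
    IsEigPD (fun x => x ^ 2) (-R) R h (h * μ) ↔
      μ ∈ hermiteSpectrum (R / √h) := by
  set a := (1 - μ) / 4 with ha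
  set b := (3 - μ) / 4 with hb
  have heven := isSchrodingerSolution_exp_mul_comp (κ := 4 * a) hh
    (hasDerivAt_hermiteSeries_zero a) fun x =>
      ((((hasDerivAt_id x).const_mul 2).mul (hasDerivAt_hermiteSeries_zero a x)).add
        ((hasDerivAt_hermiteSeries_succ a 0 x).const_mul (4 * a - 2))).congr_deriv
          (by simp only [id]; ring)
  have hodd := isSchrodingerSolution_exp_mul_comp (κ := 4 * b - 2) hh
    (hasDerivAt_hermiteSeries_succ b 0) fun x =>
      (hasDerivAt_hermiteSeries_zero b x).congr_deriv (by ring)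
  rw [show 1 - 4 * a = μ by rw [ha]; ring] at heven
  rw [show 1 - (4 * b - 2) = μ by rw [hb]; ring] at hodd
  rw [isEigPD_symm_iff_of_even_of_odd (by fun_prop) hh.ne' hR heven
    (fun x => by simp [neg_div, hermiteSeries_neg]) (by simp [hermiteSeries_zero_zero])
    hodd (fun x => by simp [neg_div, hermiteSeries_neg])
    (by simp [hermiteSeries_zero_zero, hermiteSeries_succ_zero, (Real.sqrt_pos.2 hh).ne'])]
  simp only [hermiteSpectrum, mem_ofPred_eq, Nat.exists_lt_succ_right, Nat.not_lt_zero, false_and,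
    exists_false, false_or]
  norm_num [ha, hb]

end HarmonicOscillator

section Counting

variable {S : Set ℝ} {m : ℕ}

lemma IsNthEig.unique {x y : ℝ} (hx : IsNthEig S m x) (hy : IsNthEig S m y) : x = y := by
  wlog hxy : x < y generalizing x y
  · rcases (not_lt.1 hxy).eq_or_lt with h | h
    · exact h.symm
    · exact (this hy hx h).symm
  have hss : {z ∈ S | z < x} ⊂ {z ∈ S | z < y} :=
    ⟨fun z hz => ⟨hz.1, hz.2.trans hxy⟩, fun hsub => lt_irrefl x (hsub ⟨hx.1, hxy⟩).2⟩
  have hlt := ncard_lt_ncard hss hy.2.1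
  rw [hx.2.2, hy.2.2] at hlt
  exact absurd hlt (lt_irrefl m)

lemma IsNthEig.image_of_strictMono {f : ℝ → ℝ} (hf : StrictMono f) {lam : ℝ}
    (hlam : IsNthEig S m lam) : IsNthEig (f '' S) m (f lam) := by
  have himage : {y ∈ f '' S | y < f lam} = f '' {x ∈ S | x < lam} := by
    ext y
    constructor
    · rintro ⟨⟨x, hx, rfl⟩, hlt⟩
      exact ⟨x, ⟨hx, hf.lt_iff_lt.1 hlt⟩, rfl⟩
    · rintro ⟨x, ⟨hx, hlt⟩, rfl⟩
      exact ⟨mem_image_of_mem f hx, hf hlt⟩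
  rw [IsNthEig, himage, ncard_image_of_injective _ hf.injective]
  exact ⟨mem_image_of_mem f hlam.1, hlam.2.1.image f, hlam.2.2⟩

lemma isNthEig_of_strictMonoOn {f : ℕ → ℝ} (hf : StrictMonoOn f (Iic m))
    (hmem : ∀ j ≤ m, f j ∈ S) (hex : ∀ x ∈ S, x < f m → ∃ j ≤ m, x = f j) :
    IsNthEig S m (f m) := by
  have himage : {x ∈ S | x < f m} = f '' Iio m := by
    ext x
    constructor
    · rintro ⟨hx, hlt⟩
      obtain ⟨j, hj, rfl⟩ := hex x hx hlt
      exact ⟨j, (hf.lt_iff_lt hj self_mem_Iic).1 hlt, rfl⟩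
    · rintro ⟨j, hj, rfl⟩
      exact ⟨hmem j (mem_Iio.1 hj).le, hf (mem_Iio.1 hj).le self_mem_Iic hj⟩
  rw [IsNthEig, himage, (hf.injOn.mono Iio_subset_Iic_self).ncard_image]
  exact ⟨hmem m le_rfl, (finite_Iio m).image f, by simp⟩

end Counting

section HermiteSpectrum

variable {x : ℝ} {m : ℕ} {e : ℕ → ℝ}

lemma setOf_isEigPD_sq_eq_image {h R : ℝ} (hh : 0 < h) (hR : 0 < R) :
    {lam | IsEigPD (fun x => x ^ 2) (-R) R h lam} = (h * ·) '' hermiteSpectrum (R / √h) := by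
  ext lam
  constructor
  · intro hlam
    rw [mem_ofPred_eq, ← mul_div_cancel₀ lam hh.ne', isEigPD_sq_iff hh hR] at hlam
    exact ⟨lam / h, hlam, mul_div_cancel₀ lam hh.ne'⟩
  · rintro ⟨μ, hμ, rfl⟩
    exact (isEigPD_sq_iff hh hR μ).2 hμ

lemma IsNthEig.const_mul_of_hermiteSpectrum {h R μ : ℝ} (hh : 0 < h) (hR : 0 < R)
    (hμ : IsNthEig (hermiteSpectrum (R / √h)) m μ) :
    IsNthEig {lam | IsEigPD (fun x => x ^ 2) (-R) R h lam} m (h * μ) := by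
  rw [setOf_isEigPD_sq_eq_image hh hR]
  exact hμ.image_of_strictMono fun _ _ hlt => mul_lt_mul_of_pos_left hlt hh

lemma exists_eq_two_mul_add_of_mem_hermiteSpectrum (hx : 0 < x) {μ : ℝ}
    (hμ : μ ∈ hermiteSpectrum x) :
    ∃ j : ℕ, ∃ ε ∈ Icc (-(1 / 2) : ℝ) (1 / 2), μ = 2 * j + 1 + 4 * ε ∧
      hermiteSeries (-(j / 2 : ℕ) - ε) (j % 2) x = 0 := by
  obtain ⟨s, hs, hzero⟩ := hμ
  set a : ℝ := (2 * s + 1 - μ) / 4 with ha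
  have ha_neg : a < 0 := by
    by_contra! ha₀
    exact (hermiteSeries_pos ha₀ hx s).ne' hzero
  set n := ⌊-a + 1 / 2⌋₊
  have hn_le : (n : ℝ) ≤ -a + 1 / 2 := Nat.floor_le (by linarith)
  have hn_lt : -a + 1 / 2 < n + 1 := Nat.lt_floor_add_one _
  refine ⟨2 * n + s, -a - n, ⟨by linarith, by linarith⟩, ?_, ?_⟩
  · push_cast
    linarith
  · rwa [show (2 * n + s) / 2 = n by omega, show (2 * n + s) % 2 = s by omega,
      show -(n : ℝ) - (-a - n) = a by ring]

lemma isNthEig_hermiteSpectrum (hx : 0 < x) (he : ∀ j ≤ m + 1, e j ∈ Ioo 0 (1 / 2))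
    (hzero : ∀ j ≤ m + 1, ∀ ε ∈ Icc (-(1 / 2) : ℝ) (1 / 2),
      (hermiteSeries (-(j / 2 : ℕ) - ε) (j % 2) x = 0 ↔ ε = e j)) :
    IsNthEig (hermiteSpectrum x) m (2 * m + 1 + 4 * e m) := by
  refine isNthEig_of_strictMonoOn (f := fun j => 2 * j + 1 + 4 * e j) ?_ ?_ ?_
  · intro i hi j hj hij
    have hij' : (i : ℝ) + 1 ≤ j := by exact_mod_cast hij
    have hei := (he i (le_add_right hi)).2
    have hej := (he j (le_add_right hj)).1
    simp only
    linarith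
  · intro j hj
    have hej := he j (le_add_right hj)
    refine ⟨j % 2, j.mod_lt two_pos, ?_⟩
    have hdiv : 2 * ((j / 2 : ℕ) : ℝ) + (j % 2 : ℕ) = j := by exact_mod_cast j.div_add_mod 2
    rw [← (hzero j (le_add_right hj) (e j) ⟨by linarith [hej.1], hej.2.le⟩).2 rfl]
    congr 1
    linarith
  · intro μ hμ hlt
    obtain ⟨j, ε, hε, rfl, hzero'⟩ := exists_eq_two_mul_add_of_mem_hermiteSpectrum hx hμ
    have hem := (he m m.le_succ).2
    have hj : j < m + 2 := by
      have : (j : ℝ) < m + 2 := by linarith [hε.1]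
      exact_mod_cast this
    obtain rfl := (hzero j (Nat.lt_succ_iff.1 hj) ε hε).1 hzero'
    have hj' : j < m + 1 := by
      have : (j : ℝ) < m + 1 := by linarith [(he j (Nat.lt_succ_iff.1 hj)).1]
      exact_mod_cast this
    exact ⟨j, Nat.lt_succ_iff.1 hj', rfl⟩

lemma exists_isNthEig_hermiteSpectrum_asymptotics (m : ℕ) :
    ∃ e : ℝ → ℝ, (∀ᶠ x in atTop, IsNthEig (hermiteSpectrum x) m (2 * m + 1 + 4 * e x)) ∧
      (fun x => e x - leadingShift m x) =O[atTop] fun x => (x ^ 2)⁻¹ * leadingShift m x := by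
  choose e he hO using fun j : ℕ => exists_shift_of_hermiteSeries_eq_zero (j / 2) (j % 2)
  simp only [Nat.mod_add_div] at hO
  refine ⟨e m, ?_, hO m⟩
  have hall := (eventually_all_finite (finite_Iic (m + 1))).2 fun j _ => he j
  filter_upwards [hall, eventually_gt_atTop 0] with x hx hx₀
  exact isNthEig_hermiteSpectrum (e := fun j => e j x) hx₀ (fun j hj => (hx j hj).1)
    fun j hj => (hx j hj).2

lemma four_mul_mul_leadingShift_div_sqrt (m : ℕ) {h R : ℝ} (hh : 0 < h) (hR : 0 < R) :
    4 * h * leadingShift m (R / √h) =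
      2 ^ (2 + m) / (m.factorial * √Real.pi) * h ^ ((1 : ℝ) / 2 - m) * R ^ (2 * m + 1) *
        Real.exp (-R ^ 2 / h) := by
  have : 0 < √h := Real.sqrt_pos.2 hh
  have hsq : √h ^ 2 = h := Real.sq_sqrt hh.le
  have hrpow : h ^ ((1 : ℝ) / 2 - m) = √h / h ^ m := by
    rw [Real.rpow_sub hh, Real.rpow_natCast, Real.sqrt_eq_rpow]
  have hpow : (R / √h) ^ (2 * m + 1) = R ^ (2 * m + 1) / (h ^ m * √h) := by
    rw [div_pow, pow_succ √h, pow_mul √h, hsq]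
  have hexp : -(R / √h) ^ 2 = -R ^ 2 / h := by rw [div_pow, hsq, neg_div]
  rw [leadingShift, hrpow, hpow, hexp]
  field_simp
  rw [hsq]
  ring

end HermiteSpectrum

theorem confined_harmonic_oscillator
    (m : ℕ)
    (lamΩ : ℝ → ℝ → ℝ)
    (hlamΩ : ∀ h R : ℝ, 0 < h → 0 < R →
      IsNthEig {lam | IsEigPD (fun x : ℝ => x ^ 2) (-R) R h lam} m (lamΩ h R)) :
    ∃ C δ : ℝ, 0 < C ∧ 0 < δ ∧ ∀ h R : ℝ, 0 < h → 0 < R → h / R ^ 2 < δ →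
      |lamΩ h R - (2 * m + 1) * h -
          2 ^ (2 + m) / ((Nat.factorial m : ℝ) * Real.sqrt Real.pi) *
            h ^ ((1 : ℝ) / 2 - (m : ℝ)) * R ^ (2 * m + 1) * Real.exp (-R ^ 2 / h)| ≤
        C * (h / R ^ 2) *
          (2 ^ (2 + m) / ((Nat.factorial m : ℝ) * Real.sqrt Real.pi) *
            h ^ ((1 : ℝ) / 2 - (m : ℝ)) * R ^ (2 * m + 1) * Real.exp (-R ^ 2 / h)) := by
  obtain ⟨e, hnth, hO⟩ := exists_isNthEig_hermiteSpectrum_asymptotics m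
  obtain ⟨C, hC, hbound⟩ := hO.exists_pos
  obtain ⟨X, hX⟩ := (hbound.bound.and (hnth.and (eventually_gt_atTop 0))).exists_forall_of_atTop
  have hX₀ : 0 < X := (hX X le_rfl).2.2
  refine ⟨C, (X ^ 2)⁻¹, hC, by positivity, fun h R hh hR hlt => ?_⟩
  have hx : 0 < R / √h := div_pos hR (Real.sqrt_pos.2 hh)
  rw [show h / R ^ 2 = ((R / √h) ^ 2)⁻¹ by rw [div_pow, Real.sq_sqrt hh.le, inv_div]] at hlt ⊢
  have hXx : X < R / √h :=
    lt_of_pow_lt_pow_left₀ 2 hx.le ((inv_lt_inv₀ (by positivity) (by positivity)).1 hlt)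
  obtain ⟨hle, hnth, -⟩ := hX _ hXx.le
  rw [← four_mul_mul_leadingShift_div_sqrt m hh hR,
    (hlamΩ h R hh hR).unique (hnth.const_mul_of_hermiteSpectrum hh hR)]
  have hτ : 0 < leadingShift m (R / √h) := leadingShift_pos m hx
  set x := R / √h
  set τ := leadingShift m x
  rw [Real.norm_eq_abs, Real.norm_of_nonneg (by positivity)] at hle
  calc |h * (2 * m + 1 + 4 * e x) - (2 * m + 1) * h - 4 * h * τ| = |4 * h * (e x - τ)| := by ring_nf
    _ = 4 * h * |e x - τ| := by rw [abs_mul, abs_of_pos (by positivity)]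
    _ ≤ 4 * h * (C * ((x ^ 2)⁻¹ * τ)) := by gcongr
    _ = C * (x ^ 2)⁻¹ * (4 * h * τ) := by ring
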